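/- Let b be a positive divisor of d, let n ≥ 2, and let s₂, …, s_n, t₂, …, t_n be integers with b dividing t_i for every i = 2, …, n. Put a = gcd(s₂, …, s_n, d). Then a unitary matrix U on ℂ^d is a local Clifford operator on the set {I, Z^b, X^{s₂}Z^{t₂}, …, X^{s_n}Z^{t_n}} (i.e. U conjugates each member of the set to a unimodular scalar multiple of some GPM) if and only if U is a local Clifford operator on the pair {X^a, Z^b} (i.e. U X^a U† and U Z^b U† are each unimodular scalar multiples of some GPM). -/

import Mathlib

open Matrix

/-- The primitive `d`-th root of unity `ω = e^{2πi/d}`. -/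
noncomputable def omega (d : ℕ) : ℂ := Complex.exp (2 * Real.pi * Complex.I / d)

/-- The power `X^s` (for any integer `s`) of the shift matrix `X` on `ℂ^d`,
`X|j⟩ = |j+1 mod d⟩`; its `(i,j)` entry is `1` iff `i ≡ j + s (mod d)`. -/
def Xpow (d : ℕ) (s : ℤ) : Matrix (Fin d) (Fin d) ℂ :=
  Matrix.of fun i j => if (i : ℤ) = (((j : ℕ) : ℤ) + s) % (d : ℤ) then (1 : ℂ) else 0

/-- The power `Z^t` (for any integer `t`) of the clock matrix `Z` on `ℂ^d`,
`Z|j⟩ = ω^j |j⟩`; it is diagonal with entries `ω^{t·j} = e^{2πi·t·j/d}`. -/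
noncomputable def Zpow (d : ℕ) (t : ℤ) : Matrix (Fin d) (Fin d) ℂ :=
  Matrix.diagonal fun j => Complex.exp (2 * Real.pi * Complex.I * (t : ℂ) * ((j : ℕ) : ℂ) / (d : ℂ))

/-- The generalized Pauli matrix `X^s Z^t` on `ℂ^d`. -/
noncomputable def GPM (d : ℕ) (s t : ℤ) : Matrix (Fin d) (Fin d) ℂ :=
  Xpow d s * Zpow d t

/-- `A ≈ B` : equality up to a unimodular (global phase) scalar. -/
def PhaseEq {n : Type*} (A B : Matrix n n ℂ) : Prop :=
  ∃ c : ℂ, ‖c‖ = 1 ∧ A = c • B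


/-- `A` is a unimodular scalar multiple of some generalized Pauli matrix on `ℂ^d`. -/
def GPMScalar (d : ℕ) (A : Matrix (Fin d) (Fin d) ℂ) : Prop :=
  ∃ (c : ℂ) (m n : ℤ), ‖c‖ = 1 ∧ A = c • GPM d m n

/-!
Since `Z * X = ω • (X * Z)`, the GPMs form a group up to phases, so the invertible matrices that `U`
conjugates to phased GPMs form a subgroup `H`. From `Z ^ b ∈ H` we get `Z ^ tᵢ ∈ H`, so the clock
factor can be cancelled and `X ^ sᵢ * Z ^ tᵢ ∈ H` means `X ^ sᵢ ∈ H`. Finally `{n | X ^ n ∈ H}` is a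
subgroup `gℤ` of `ℤ` containing `d`, so it contains every `sᵢ` iff `g` divides `a`, that is, iff it
contains `a`.
-/

section Subgroup

variable {G ι : Type*} [Group G] (H : Subgroup G)

lemma exists_forall_zpow_mem_iff_dvd (x : G) : ∃ g : ℤ, ∀ n : ℤ, x ^ n ∈ H ↔ g ∣ n := by
  obtain ⟨g, hg⟩ := Int.subgroup_cyclic (H.comap (zpowersHom G x)).toAddSubgroup'
  refine ⟨g, fun n => ?_⟩
  rw [← Int.mem_zmultiples_iff, AddSubgroup.zmultiples_eq_closure, ← hg]
  rfl

variable {x z : G}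

lemma zpow_gcd_mem_iff {d : ℤ} (hd : x ^ d ∈ H) (S : Finset ι) (s : ι → ℤ) :
    x ^ ((S.gcd s).gcd d : ℤ) ∈ H ↔ ∀ i ∈ S, x ^ s i ∈ H := by
  obtain ⟨g, hg⟩ := exists_forall_zpow_mem_iff_dvd H x
  simp only [hg] at hd ⊢
  rw [Int.dvd_coe_gcd_iff, Finset.dvd_gcd_iff, and_iff_left hd]

lemma zpow_mem_and_forall_zpow_mul_zpow_mem_iff {d b : ℤ} (hd : x ^ d ∈ H) (S : Finset ι)
    (s : ι → ℤ) {t : ι → ℤ} (hbt : ∀ i ∈ S, b ∣ t i) :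
    (z ^ b ∈ H ∧ ∀ i ∈ S, x ^ s i * z ^ t i ∈ H) ↔
      x ^ ((S.gcd s).gcd d : ℤ) ∈ H ∧ z ^ b ∈ H := by
  rw [and_comm, zpow_gcd_mem_iff H hd]
  refine and_congr_left fun hz => forall₂_congr fun i hi => H.mul_mem_cancel_right ?_
  obtain ⟨c, hc⟩ := hbt i hi
  rw [hc, _root_.zpow_mul]
  exact H.zpow_mem hz c

end Subgroup

section Weyl

variable {d : ℕ} [NeZero d]

lemma zmod_finEquiv_apply (j : Fin d) : ZMod.finEquiv d j = (j : ℕ) := by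
  cases d with
  | zero => exact j.elim0
  | succ n => exact (Fin.cast_val_eq_self j).symm

lemma Xpow_apply (s : ℤ) (i j : Fin d) :
    Xpow d s i j = if ZMod.finEquiv d i = ZMod.finEquiv d j + s then 1 else 0 := by
  have hi : ((i : ℕ) : ℤ) % d = (i : ℕ) := Int.emod_eq_of_lt (by positivity) (mod_cast i.2)
  have h := ZMod.intCast_eq_intCast_iff' (i : ℕ) ((j : ℕ) + s) d
  rw [hi] at h
  push_cast at h
  simp only [Xpow, of_apply, zmod_finEquiv_apply, h]

lemma Zpow_eq_diagonal (t : ℤ) :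
    Zpow d t = diagonal fun j => ZMod.stdAddChar ((t : ZMod d) * ZMod.finEquiv d j) := by
  rw [Zpow]
  congr! 2 with j
  have h := ZMod.stdAddChar_coe (N := d) (t * (j : ℕ))
  push_cast at h
  rw [zmod_finEquiv_apply, h, mul_assoc _ (t : ℂ)]

lemma Xpow_eq_one_of_dvd {s : ℤ} (hs : (d : ℤ) ∣ s) : Xpow d s = 1 := by
  ext i j
  simp only [Xpow_apply, (ZMod.intCast_zmod_eq_zero_iff_dvd s d).mpr hs, add_zero,
    EmbeddingLike.apply_eq_iff_eq, one_apply]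

lemma Xpow_zero : Xpow d 0 = 1 :=
  Xpow_eq_one_of_dvd (dvd_zero _)

lemma Xpow_add (s s' : ℤ) : Xpow d (s + s') = Xpow d s * Xpow d s' := by
  ext i j
  let k := (ZMod.finEquiv d).symm (ZMod.finEquiv d j + s')
  have hk (l : Fin d) : ZMod.finEquiv d l = ZMod.finEquiv d j + s' ↔ l = k :=
    (ZMod.finEquiv d).toEquiv.eq_symm_apply.symm
  simp only [mul_apply, Xpow_apply, hk, mul_ite, mul_one, mul_zero, Finset.sum_ite_eq',
    Finset.mem_univ, if_true, k, RingEquiv.apply_symm_apply]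
  push_cast
  rw [add_assoc, add_comm (s : ZMod d)]

lemma Zpow_zero : Zpow d 0 = 1 := by
  simp [Zpow_eq_diagonal]

lemma Zpow_add (t t' : ℤ) : Zpow d (t + t') = Zpow d t * Zpow d t' := by
  simp only [Zpow_eq_diagonal, diagonal_mul_diagonal, Int.cast_add, add_mul,
    AddChar.map_add_eq_mul]

lemma Zpow_mul_Xpow (s t : ℤ) :
    Zpow d t * Xpow d s = ZMod.stdAddChar (t * s : ZMod d) • GPM d s t := by
  ext i j
  simp only [GPM, Zpow_eq_diagonal, diagonal_mul, mul_diagonal, Matrix.smul_apply, smul_eq_mul,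
    Xpow_apply, mul_ite, ite_mul, mul_one, one_mul, mul_zero, zero_mul]
  refine if_ctx_congr Iff.rfl (fun h => ?_) fun _ => rfl
  rw [h, mul_add, AddChar.map_add_eq_mul, mul_comm]

lemma GPM_zero_zero : GPM d 0 0 = 1 := by
  rw [GPM, Xpow_zero, Zpow_zero, mul_one]

lemma GPM_mul_GPM (m n m' n' : ℤ) :
    GPM d m n * GPM d m' n' = ZMod.stdAddChar (n * m' : ZMod d) • GPM d (m + m') (n + n') := by
  calc GPM d m n * GPM d m' n'
      = Xpow d m * (Zpow d n * Xpow d m') * Zpow d n' := by simp only [GPM, mul_assoc]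
    _ = ZMod.stdAddChar (n * m' : ZMod d) • GPM d (m + m') (n + n') := by
      simp only [Zpow_mul_Xpow, GPM, Xpow_add, Zpow_add, Matrix.mul_smul, smul_mul, mul_assoc]

variable (d)

/-- The homomorphism `s ↦ X ^ s`. -/
def shiftHom : Multiplicative ℤ →* Matrix (Fin d) (Fin d) ℂ where
  toFun s := Xpow d s.toAdd
  map_one' := Xpow_zero
  map_mul' s s' := Xpow_add s.toAdd s'.toAdd

/-- The homomorphism `t ↦ Z ^ t`. -/
noncomputable def clockHom : Multiplicative ℤ →* Matrix (Fin d) (Fin d) ℂ where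
  toFun t := Zpow d t.toAdd
  map_one' := Zpow_zero
  map_mul' t t' := Zpow_add t.toAdd t'.toAdd

/-- The shift matrix `X` as an invertible matrix. -/
def shiftUnit : GL (Fin d) ℂ := (shiftHom d).toHomUnits (.ofAdd 1)

/-- The clock matrix `Z` as an invertible matrix. -/
noncomputable def clockUnit : GL (Fin d) ℂ := (clockHom d).toHomUnits (.ofAdd 1)

variable {d}

lemma coe_shiftUnit_zpow (s : ℤ) : (shiftUnit d ^ s).val = Xpow d s := by
  rw [shiftUnit, ← map_zpow, ← ofAdd_zsmul, smul_eq_mul, mul_one]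
  rfl

lemma coe_clockUnit_zpow (t : ℤ) : (clockUnit d ^ t).val = Zpow d t := by
  rw [clockUnit, ← map_zpow, ← ofAdd_zsmul, smul_eq_mul, mul_one]
  rfl

lemma shiftUnit_zpow_natCast_self : shiftUnit d ^ (d : ℤ) = 1 :=
  Units.ext <| (coe_shiftUnit_zpow d).trans (Xpow_eq_one_of_dvd dvd_rfl)

end Weyl

section PhasedGPM

variable {d : ℕ} [NeZero d]

lemma GPMScalar.one : GPMScalar d 1 :=
  ⟨1, 0, 0, norm_one, by rw [GPM_zero_zero, one_smul]⟩

lemma GPMScalar.mul {A B : Matrix (Fin d) (Fin d) ℂ} (hA : GPMScalar d A) (hB : GPMScalar d B) :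
    GPMScalar d (A * B) := by
  obtain ⟨c, m, n, hc, rfl⟩ := hA
  obtain ⟨c', m', n', hc', rfl⟩ := hB
  refine ⟨c * c' * ZMod.stdAddChar (n * m' : ZMod d), m + m', n + n', ?_, ?_⟩
  · rw [norm_mul, norm_mul, hc, hc', AddChar.norm_apply, mul_one, mul_one]
  · rw [smul_mul_smul_comm, GPM_mul_GPM, smul_smul]

lemma GPMScalar.inv {A : GL (Fin d) ℂ} (hA : GPMScalar d A.val) : GPMScalar d A⁻¹.val := by
  obtain ⟨c, m, n, hc, hA⟩ := hA
  let w : ℂ := c * ZMod.stdAddChar (n * (-m : ℤ) : ZMod d)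
  have hw : ‖w‖ = 1 := by rw [norm_mul, hc, AddChar.norm_apply, mul_one]
  have hw0 : w ≠ 0 := norm_ne_zero_iff.mp (hw ▸ one_ne_zero)
  refine ⟨w⁻¹, -m, -n, by rw [norm_inv, hw, inv_one], Units.inv_eq_of_mul_eq_one_right ?_⟩
  rw [hA, smul_mul_smul_comm, GPM_mul_GPM, add_neg_cancel, add_neg_cancel, GPM_zero_zero,
    smul_smul, mul_right_comm, mul_inv_cancel₀ hw0, one_smul]

variable (d) in
/-- The group of generalized Pauli matrices with unimodular phases, inside `GL`. -/
def phasedGPM : Subgroup (GL (Fin d) ℂ) where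
  carrier := {A | GPMScalar d A.val}
  one_mem' := GPMScalar.one
  mul_mem' := GPMScalar.mul
  inv_mem' := GPMScalar.inv

/-- The group of invertible matrices that conjugation by `U` maps to phased generalized Pauli
matrices: `U` is a local Clifford operator on a set of GPMs when the set lies in this group. -/
def localCliffordGroup (U : GL (Fin d) ℂ) : Subgroup (GL (Fin d) ℂ) :=
  (phasedGPM d).comap (MulAut.conj U).toMonoidHom

lemma mem_localCliffordGroup {U A : GL (Fin d) ℂ} :
    A ∈ localCliffordGroup U ↔ GPMScalar d (U * A * U⁻¹.val) :=
  Iff.rfl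

end PhasedGPM

theorem local_clifford_iff_general {d : ℕ} [NeZero d] {ι : Type*} (S : Finset ι) (s t : ι → ℤ)
    (b : ℤ) (hbt : ∀ i ∈ S, b ∣ t i) (U : GL (Fin d) ℂ) :
    (GPMScalar d (U * 1 * U⁻¹.val) ∧ GPMScalar d (U * Zpow d b * U⁻¹.val) ∧
      ∀ i ∈ S, GPMScalar d (U * GPM d (s i) (t i) * U⁻¹.val)) ↔
    (GPMScalar d (U * Xpow d ((S.gcd s).gcd d : ℕ) * U⁻¹.val) ∧
      GPMScalar d (U * Zpow d b * U⁻¹.val)) := by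
  have hone : GPMScalar d (U * 1 * U⁻¹.val) := one_mem (localCliffordGroup U)
  have hd : shiftUnit d ^ (d : ℤ) ∈ localCliffordGroup U := by
    rw [shiftUnit_zpow_natCast_self]
    exact one_mem _
  simpa only [hone, true_and, mem_localCliffordGroup, Units.val_mul, GPM, coe_shiftUnit_zpow,
    coe_clockUnit_zpow] using
    zpow_mem_and_forall_zpow_mul_zpow_mem_iff (localCliffordGroup U) (z := clockUnit d) hd S s hbt

/-- **Lemma 4.1.** Let `b ∣ d` be positive and let `X^{s_i} Z^{t_i}`
(`i = 2, …, n`, here indexed by `Fin k` with `k = n - 1 ≥ 1`) satisfy `b ∣ t_i`; put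
`a = gcd(s₂, …, s_n, d)`. A unitary `U` is a local Clifford operator on the set
`{I, Z^b, X^{s₂}Z^{t₂}, …, X^{s_n}Z^{t_n}}` iff it is a local Clifford operator on
the pair `{X^a, Z^b}`. -/
theorem local_clifford_iff (d : ℕ) (hd : 2 ≤ d) (b : ℕ) (hb0 : 0 < b) (hb : b ∣ d)
    (k : ℕ) (hk : 1 ≤ k) (s t : Fin k → ℤ) (hbt : ∀ i, (b : ℤ) ∣ t i)
    (U : Matrix (Fin d) (Fin d) ℂ) (hU : U ∈ Matrix.unitaryGroup (Fin d) ℂ) :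
    (GPMScalar d (U * 1 * Uᴴ) ∧ GPMScalar d (U * Zpow d (b : ℤ) * Uᴴ) ∧
      ∀ i, GPMScalar d (U * GPM d (s i) (t i) * Uᴴ)) ↔
    (GPMScalar d (U * Xpow d ((Int.gcd (Finset.univ.gcd s) (d : ℤ) : ℕ) : ℤ) * Uᴴ) ∧
      GPMScalar d (U * Zpow d (b : ℤ) * Uᴴ)) := by
  have : NeZero d := ⟨by lia⟩
  simpa only [Finset.mem_univ, true_imp_iff, Unitary.val_toUnits_apply,
    Unitary.val_inv_toUnits_apply, ← Unitary.star_eq_inv, Unitary.coe_star,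
    star_eq_conjTranspose] using
    local_clifford_iff_general Finset.univ s t b (fun i _ => hbt i) (Unitary.toUnits ⟨U, hU⟩)
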